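/- Let H = C ∗ D be a free product of finitely generated groups C and D, each with infinite abelianization. Then for every proper word w, the verbal set w[H] is not rational in H. -/

import Mathlib

open Pointwise

/-- The verbal set `w[G]`: all values of the word `w` in `G`. -/
def verbalSet (w : FreeGroup ℕ) (G : Type*) [Group G] : Set G :=
  {g | ∃ φ : FreeGroup ℕ →* G, φ w = g}

/-- Exponent sums of a word in the generators, as a finitely supported function. -/
noncomputable def expSum (w : FreeGroup ℕ) : ℕ →₀ ℤ :=
  Multiplicative.toAdd
    ((FreeGroup.lift fun i => Multiplicative.ofAdd (Finsupp.single i (1 : ℤ))) w)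

/-- `e(w)`: the gcd of the exponent sums of the generators in `w` (0 if all are 0). -/
noncomputable def eWord (w : FreeGroup ℕ) : ℕ :=
  (expSum w).support.gcd fun i => ((expSum w) i).natAbs

/-- A word is proper if `w[G] ≠ {1}` and `w[H] ≠ H` for some groups `G`, `H`. -/
def IsProperWord (w : FreeGroup ℕ) : Prop :=
  ∃ (G : Type) (_ : Group G) (H : Type) (_ : Group H),
    verbalSet w G ≠ {1} ∧ verbalSet w H ≠ Set.univ

/-- Rational subsets of a monoid: the smallest family containing the finite sets and
closed under union, product and submonoid generation (Kleene star). -/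
inductive IsRational {M : Type*} [Monoid M] : Set M → Prop
  | finite (s : Set M) (h : s.Finite) : IsRational s
  | union {s t : Set M} : IsRational s → IsRational t → IsRational (s ∪ t)
  | mul {s t : Set M} : IsRational s → IsRational t → IsRational (s * t)
  | star {s : Set M} : IsRational s → IsRational (Submonoid.closure s : Set M)

section Cocycles

/-- A `ℤ`-valued function on `X` attached to each `g : G`, satisfying the Leibniz rule of
Fox derivatives. -/
def IsCocycle {G X : Type*} [Group G] [MulAction G X] (D : G → X → ℤ) : Prop :=
  ∀ g h x, D (g * h) x = D g x + D h (g⁻¹ • x)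

namespace IsCocycle

variable {G X : Type*} [Group G] [MulAction G X] {D : G → X → ℤ}

theorem one (hD : IsCocycle D) (x : X) : D 1 x = 0 := by
  simpa using hD 1 1 x

theorem inv (hD : IsCocycle D) (g : G) (x : X) : D g⁻¹ x = -D g (g • x) := by
  have h := hD g⁻¹ g x
  rw [inv_mul_cancel, hD.one, inv_inv] at h
  linarith

theorem finite_support {α : Type*} [MulAction (FreeGroup α) X] {D : FreeGroup α → X → ℤ}
    (hD : IsCocycle D) (h : ∀ i, {x | D (FreeGroup.of i) x ≠ 0}.Finite) (g : FreeGroup α) :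
    {x | D g x ≠ 0}.Finite := by
  have inv_finite : ∀ g, {x | D g x ≠ 0}.Finite → {x | D g⁻¹ x ≠ 0}.Finite := by
    intro g hg
    refine (hg.preimage (MulAction.injective g).injOn).subset fun x hx => ?_
    simpa [hD.inv] using hx
  induction g using FreeGroup.induction_on with
  | C1 => simp [hD.one]
  | of i => exact h i
  | inv_of i hi => exact inv_finite _ hi
  | mul g k hg hk =>
    refine (hg.union (hk.preimage (MulAction.injective g⁻¹).injOn)).subset fun x hx => ?_
    by_contra hc
    simp only [Set.mem_union, Set.mem_ofPred_eq, Set.mem_preimage, not_or, not_not] at hc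
    exact hx (by rw [hD, hc.1, hc.2, add_zero])

end IsCocycle

theorem exists_isCocycle {α X : Type*} [MulAction (FreeGroup α) X] (t : α → X → ℤ) :
    ∃ D : FreeGroup α → X → ℤ, IsCocycle D ∧ ∀ i, D (FreeGroup.of i) = t i := by
  let P : α → Equiv.Perm (X × ℤ) := fun i =>
    { toFun := fun p => (FreeGroup.of i • p.1, p.2 + t i (FreeGroup.of i • p.1))
      invFun := fun p => ((FreeGroup.of i)⁻¹ • p.1, p.2 - t i p.1)
      left_inv := fun p => by simp
      right_inv := fun p => by simp }
  let L := FreeGroup.lift P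
  have key : ∀ g, ∃ d : X → ℤ, ∀ x n, L g (x, n) = (g • x, n + d (g • x)) := by
    intro g
    induction g using FreeGroup.induction_on with
    | C1 => exact ⟨0, fun x n => by simp⟩
    | of i => exact ⟨t i, fun x n => by simp [L, P]⟩
    | inv_of i h =>
      obtain ⟨d, hd⟩ := h
      refine ⟨fun x => -d (FreeGroup.of i • x), fun x n => ?_⟩
      rw [map_inv, Equiv.Perm.inv_eq_iff_eq, hd]
      simp
    | mul g h hg hh =>
      obtain ⟨d, hd⟩ := hg
      obtain ⟨d', hd'⟩ := hh
      refine ⟨fun x => d x + d' (g⁻¹ • x), fun x n => ?_⟩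
      rw [map_mul, Equiv.Perm.mul_apply, hd', hd]
      simp [mul_smul]
      ring
  choose D hD using key
  refine ⟨D, fun g h x => ?_, fun i => ?_⟩
  · have e := hD (g * h) ((g * h)⁻¹ • x) 0
    rw [map_mul, Equiv.Perm.mul_apply, hD, hD] at e
    simpa [mul_smul, add_comm] using (congrArg Prod.snd e).symm
  · funext x
    have e := hD (FreeGroup.of i) ((FreeGroup.of i)⁻¹ • x) 0
    simpa [L, P] using (congrArg Prod.snd e).symm

end Cocycles

section Rational

theorem IsRational.image {M N : Type*} [Monoid M] [Monoid N] (f : M →* N) {s : Set M}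
    (hs : IsRational s) : IsRational (f '' s) := by
  induction hs with
  | finite s h => exact .finite _ (h.image f)
  | union _ _ hs ht => rw [Set.image_union]; exact .union hs ht
  | mul _ _ hs ht => rw [Set.image_mul]; exact .mul hs ht
  | star _ hs =>
    have := IsRational.star hs
    rwa [← MonoidHom.map_mclosure, Submonoid.coe_map] at this

/-- A rational set is cut along the support of a finitely supported cocycle into products taken
from a finite list. -/
theorem IsRational.exists_finite_cover {G : Type*} [Group G] {D : G → G → ℤ}
    (hD : IsCocycle D) (hfin : ∀ g, {x | D g x ≠ 0}.Finite) {S : Set G} (hS : IsRational S) :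
    ∃ 𝓒 : Set (Set G × Set G), 𝓒.Finite ∧ (∀ p ∈ 𝓒, p.1 * p.2 ⊆ S) ∧
      ∀ g ∈ S, ∀ h, D g h ≠ 0 → ∃ p ∈ 𝓒, h ∈ p.1 ∧ h⁻¹ * g ∈ p.2 := by
  have split : ∀ g h x, D (g * h) x ≠ 0 → D g x ≠ 0 ∨ D h (g⁻¹ * x) ≠ 0 := by
    intro g h x hx
    by_contra! hc
    exact hx (by rw [hD, smul_eq_mul, hc.1, hc.2, add_zero])
  induction hS with
  | finite S hS =>
    refine ⟨⋃ g ∈ S, (fun h => ({h}, {h⁻¹ * g})) '' {x | D g x ≠ 0},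
      hS.biUnion fun g _ => (hfin g).image _, ?_, ?_⟩
    · intro p hp
      simp only [Set.mem_iUnion, Set.mem_image] at hp
      obtain ⟨g, hg, h, _, rfl⟩ := hp
      simpa using hg
    · intro g hg h hh
      exact ⟨({h}, {h⁻¹ * g}), Set.mem_biUnion hg ⟨h, hh, rfl⟩, rfl, rfl⟩
  | @union S T _ _ ihS ihT =>
    obtain ⟨𝓢, h𝓢, hS, hS'⟩ := ihS
    obtain ⟨𝓣, h𝓣, hT, hT'⟩ := ihT
    refine ⟨𝓢 ∪ 𝓣, h𝓢.union h𝓣, ?_, ?_⟩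
    · rintro p (hp | hp)
      · exact (hS p hp).trans Set.subset_union_left
      · exact (hT p hp).trans Set.subset_union_right
    · rintro g (hg | hg) h hh
      · obtain ⟨p, hp, hp'⟩ := hS' g hg h hh
        exact ⟨p, .inl hp, hp'⟩
      · obtain ⟨p, hp, hp'⟩ := hT' g hg h hh
        exact ⟨p, .inr hp, hp'⟩
  | @mul S T _ _ ihS ihT =>
    obtain ⟨𝓢, h𝓢, hS, hS'⟩ := ihS
    obtain ⟨𝓣, h𝓣, hT, hT'⟩ := ihT
    refine ⟨(fun p => (p.1, p.2 * T)) '' 𝓢 ∪ (fun p => (S * p.1, p.2)) '' 𝓣,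
      (h𝓢.image _).union (h𝓣.image _), ?_, ?_⟩
    · rintro _ (⟨p, hp, rfl⟩ | ⟨p, hp, rfl⟩)
      · rw [← mul_assoc]; exact Set.mul_subset_mul_right (hS p hp)
      · rw [mul_assoc]; exact Set.mul_subset_mul_left (hT p hp)
    · rintro _ ⟨s, hs, t, ht, rfl⟩ h hh
      rcases split s t h hh with hh | hh
      · obtain ⟨p, hp, h1, h2⟩ := hS' s hs h hh
        exact ⟨_, .inl ⟨p, hp, rfl⟩, h1, h⁻¹ * s, h2, t, ht, by simp [mul_assoc]⟩
      · obtain ⟨p, hp, h1, h2⟩ := hT' t ht _ hh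
        exact ⟨_, .inr ⟨p, hp, rfl⟩, ⟨s, hs, _, h1, by simp⟩, by simpa [mul_assoc] using h2⟩
  | @star S _ ihS =>
    obtain ⟨𝓢, h𝓢, hS, hS'⟩ := ihS
    set C := Submonoid.closure S
    refine ⟨(fun p => ((C : Set G) * p.1, p.2 * (C : Set G))) '' 𝓢, h𝓢.image _, ?_, ?_⟩
    · rintro _ ⟨p, hp, rfl⟩ _ ⟨_, ⟨c, hc, x, hx, rfl⟩, _, ⟨y, hy, d, hd, rfl⟩, rfl⟩
      have := C.mul_mem (C.mul_mem hc
        (Submonoid.subset_closure (hS p hp ⟨x, hx, y, hy, rfl⟩))) hd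
      simpa [mul_assoc] using this
    · intro g hg
      induction hg using Submonoid.closure_induction with
      | mem g hg =>
        intro h hh
        obtain ⟨p, hp, h1, h2⟩ := hS' g hg h hh
        exact ⟨_, ⟨p, hp, rfl⟩, ⟨1, C.one_mem, h, h1, by simp⟩, _, h2, 1, C.one_mem, by simp⟩
      | one => exact fun h hh => absurd (hD.one h) hh
      | mul x y hx hy ihx ihy =>
        intro h hh
        rcases split x y h hh with hh | hh
        · obtain ⟨_, ⟨p, hp, rfl⟩, h1, u, hu, c, hc, e⟩ := ihx h hh
          refine ⟨_, ⟨p, hp, rfl⟩, h1, u, hu, c * y, C.mul_mem hc hy, ?_⟩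
          simp only at e ⊢
          rw [← mul_assoc, e, mul_assoc]
        · obtain ⟨_, ⟨p, hp, rfl⟩, ⟨c, hc, u, hu, e⟩, h2⟩ := ihy _ hh
          refine ⟨_, ⟨p, hp, rfl⟩, ⟨x * c, C.mul_mem hx hc, u, hu, ?_⟩, ?_⟩
          · simp only at e ⊢
            rw [mul_assoc, e, mul_inv_cancel_left]
          · simpa [mul_assoc] using h2

/-- Pumping lemma: a sufficiently long run of cuts along a geodesic `p aⁱ` can be lengthened. -/
theorem IsRational.exists_pump {G : Type*} [Group G] {D : G → G → ℤ}
    (hD : IsCocycle D) (hfin : ∀ g, {x | D g x ≠ 0}.Finite) {S : Set G} (hS : IsRational S)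
    (a : G) :
    ∃ N : ℕ, ∀ v ∈ S, ∀ p, (∀ i ≤ N, D v (p * a ^ i) ≠ 0) →
      ∃ d : ℕ, 0 < d ∧ p * a ^ d * p⁻¹ * v ∈ S := by
  obtain ⟨𝓒, h𝓒, hS1, hS2⟩ := hS.exists_finite_cover hD hfin
  refine ⟨h𝓒.toFinset.card, fun v hv p hp => ?_⟩
  have : ∀ i : ℕ, ∃ c : Set G × Set G, i ≤ h𝓒.toFinset.card →
      c ∈ 𝓒 ∧ p * a ^ i ∈ c.1 ∧ (p * a ^ i)⁻¹ * v ∈ c.2 := by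
    intro i
    by_cases hi : i ≤ h𝓒.toFinset.card
    · obtain ⟨c, hc⟩ := hS2 v hv _ (hp i hi)
      exact ⟨c, fun _ => hc⟩
    · exact ⟨default, fun h => absurd h hi⟩
  choose c hc using this
  obtain ⟨i, hi, j, hj, hij, e⟩ := Finset.exists_ne_map_eq_of_card_lt_of_maps_to
    (s := Finset.range (h𝓒.toFinset.card + 1)) (t := h𝓒.toFinset) (by simp) (f := c)
    (fun i hi => by
      simpa using (hc i (Nat.lt_succ_iff.mp (Finset.mem_range.mp hi))).1)
  wlog hlt : i < j generalizing i j
  · exact this j hj i hi hij.symm e.symm (by omega)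
  obtain ⟨-, -, hi2⟩ := hc i (Nat.lt_succ_iff.mp (Finset.mem_range.mp hi))
  obtain ⟨hj0, hj1, -⟩ := hc j (Nat.lt_succ_iff.mp (Finset.mem_range.mp hj))
  refine ⟨j - i, by omega, ?_⟩
  rw [e] at hi2
  have := hS1 _ hj0 ⟨_, hj1, _, hi2, rfl⟩
  convert this using 1
  obtain ⟨k, rfl⟩ := Nat.exists_eq_add_of_lt hlt
  rw [show i + k + 1 - i = k + 1 by omega, show i + k + 1 = (k + 1) + i by omega, pow_add]
  group

end Rational

section ExponentSums

@[simp] theorem expSum_one : expSum 1 = 0 := by simp [expSum]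

@[simp] theorem expSum_of (i : ℕ) : expSum (FreeGroup.of i) = Finsupp.single i 1 := by
  simp [expSum]

@[simp] theorem expSum_inv (w : FreeGroup ℕ) : expSum w⁻¹ = -expSum w := by simp [expSum]

@[simp] theorem expSum_mul (v w : FreeGroup ℕ) : expSum (v * w) = expSum v + expSum w := by
  simp [expSum]

theorem toAdd_map_eq_sum (ψ : FreeGroup ℕ →* Multiplicative ℤ) (w : FreeGroup ℕ) :
    (ψ w).toAdd = (expSum w).sum fun i n => n * (ψ (FreeGroup.of i)).toAdd := by
  induction w using FreeGroup.induction_on with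
  | C1 => simp
  | of i => simp
  | inv_of i h =>
    rw [map_inv, toAdd_inv, h, expSum_inv, Finsupp.sum_neg_index (by simp), Finsupp.sum,
      Finsupp.sum, ← Finset.sum_neg_distrib]
    simp
  | mul v w hv hw =>
    rw [map_mul, toAdd_mul, hv, hw, expSum_mul, Finsupp.sum_add_index' (by simp)]
    intros; ring

theorem eWord_dvd (w : FreeGroup ℕ) (i : ℕ) : (eWord w : ℤ) ∣ expSum w i := by
  by_cases hi : i ∈ (expSum w).support
  · exact Int.natCast_dvd.mpr (Finset.gcd_dvd hi)
  · simp [Finsupp.notMem_support_iff.mp hi]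

theorem pow_eWord_mem_verbalSet (w : FreeGroup ℕ) {G : Type*} [Group G] (g : G) :
    g ^ eWord w ∈ verbalSet w G := by
  obtain ⟨c, hc⟩ := Finset.gcd_eq_sum_mul (expSum w).support (expSum w)
  obtain ⟨m, hm⟩ : (expSum w).support.gcd (expSum w) ∣ (eWord w : ℤ) := by
    rw [← Int.natAbs_dvd, Int.natCast_dvd_natCast]
    exact Finset.dvd_gcd fun i hi => Int.natAbs_dvd_natAbs.mpr (Finset.gcd_dvd hi)
  let ψ : FreeGroup ℕ →* Multiplicative ℤ := FreeGroup.lift fun i => Multiplicative.ofAdd (c i * m)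
  refine ⟨(zpowersHom G g).comp ψ, ?_⟩
  have : (ψ w).toAdd = eWord w := by
    rw [toAdd_map_eq_sum, hm, hc, Finset.sum_mul, Finsupp.sum]
    refine Finset.sum_congr rfl fun i _ => ?_
    simp [ψ]; ring
  rw [MonoidHom.comp_apply, zpowersHom_apply, this, zpow_natCast]

theorem IsProperWord.ne_one {w : FreeGroup ℕ} (hw : IsProperWord w) : w ≠ 1 := by
  rintro rfl
  obtain ⟨G, _, H, _, h, -⟩ := hw
  exact h (Set.ext fun g => ⟨fun ⟨φ, hφ⟩ => by simp [← hφ], fun hg => ⟨1, by simpa using hg.symm⟩⟩)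

theorem IsProperWord.eWord_ne_one {w : FreeGroup ℕ} (hw : IsProperWord w) : eWord w ≠ 1 := by
  intro he
  obtain ⟨G, _, H, _, -, h⟩ := hw
  refine h (Set.eq_univ_of_forall fun g => ?_)
  simpa [he] using pow_eWord_mem_verbalSet w g

theorem image_verbalSet (w : FreeGroup ℕ) {G H : Type*} [Group G] [Group H] {f : G →* H}
    (hf : Function.Surjective f) : f '' verbalSet w G = verbalSet w H := by
  ext h
  constructor
  · rintro ⟨_, ⟨φ, rfl⟩, rfl⟩
    exact ⟨f.comp φ, rfl⟩
  · rintro ⟨φ, rfl⟩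
    choose g hg using fun i => hf (φ (FreeGroup.of i))
    refine ⟨_, ⟨FreeGroup.lift g, rfl⟩, ?_⟩
    rw [← MonoidHom.comp_apply]
    congr 1
    ext i
    simp [hg]

end ExponentSums

section Quotients

theorem exists_surjective_hom_int (C : Type*) [Group C] [Group.FG C]
    (hC : Infinite (Abelianization C)) :
    ∃ f : C →* Multiplicative ℤ, Function.Surjective f := by
  have hfg : Group.FG (Abelianization C) :=
    Group.fg_of_surjective (f := Abelianization.of) (QuotientGroup.mk_surjective)
  obtain ⟨n, ι, _, p, hp, e, ⟨E⟩⟩ :=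
    AddCommGroup.equiv_free_prod_directSum_zmod (Additive (Abelianization C))
  rcases Nat.eq_zero_or_pos n with rfl | hn
  · exfalso
    have : ∀ i, NeZero (p i ^ e i) := fun i => ⟨pow_ne_zero _ (hp i).ne_zero⟩
    have : Finite (DirectSum ι fun i => ZMod (p i ^ e i)) :=
      Finite.of_injective (fun x i => x i) DFunLike.coe_injective
    have := Finite.of_equiv _ E.symm.toEquiv
    exact hC.not_finite this
  · let g : Additive (Abelianization C) →+ ℤ :=
      ((Finsupp.applyAddHom (⟨0, hn⟩ : Fin n)).comp (AddMonoidHom.fst _ _)).comp E.toAddMonoidHom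
    have hg : Function.Surjective g := fun k =>
      ⟨E.symm (Finsupp.single ⟨0, hn⟩ k, 0), by simp [g]⟩
    refine ⟨(AddMonoidHom.toMultiplicativeRight g).comp Abelianization.of, ?_⟩
    exact (show Function.Surjective (AddMonoidHom.toMultiplicativeRight g) from hg).comp
      (QuotientGroup.mk_surjective)

theorem exists_surjective_hom_freeGroup_bool {C D : Type*} [Group C] [Group D]
    {f : C →* Multiplicative ℤ} (hf : Function.Surjective f)
    {g : D →* Multiplicative ℤ} (hg : Function.Surjective g) :
    ∃ F : Monoid.Coprod C D →* FreeGroup Bool, Function.Surjective F := by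
  refine ⟨Monoid.Coprod.lift ((zpowersHom _ (FreeGroup.of true)).comp f)
    ((zpowersHom _ (FreeGroup.of false)).comp g), ?_⟩
  rw [← MonoidHom.range_eq_top, eq_top_iff, ← FreeGroup.closure_range_of, Subgroup.closure_le]
  rintro _ ⟨(_ | _), rfl⟩
  · obtain ⟨d, hd⟩ := hg (Multiplicative.ofAdd 1)
    exact ⟨Monoid.Coprod.inr d, by simp [hd, zpowersHom_apply]⟩
  · obtain ⟨c, hc⟩ := hf (Multiplicative.ofAdd 1)
    exact ⟨Monoid.Coprod.inl c, by simp [hc, zpowersHom_apply]⟩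

theorem exists_injective_hom_freeGroup_bool :
    ∃ φ : FreeGroup ℕ →* FreeGroup Bool, Function.Injective φ := by
  let σ : Multiplicative ℤ →* MulAut (FreeGroup ℤ) :=
    zpowersHom _ (FreeGroup.freeGroupCongr (Equiv.addRight (1 : ℤ)))
  let F : FreeGroup Bool →* SemidirectProduct (FreeGroup ℤ) (Multiplicative ℤ) σ :=
    FreeGroup.lift fun b => if b then SemidirectProduct.inl (FreeGroup.of 0)
      else SemidirectProduct.inr (Multiplicative.ofAdd 1)
  let a : FreeGroup Bool := FreeGroup.of true
  let b : FreeGroup Bool := FreeGroup.of false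
  let φ : FreeGroup ℕ →* FreeGroup Bool := FreeGroup.lift fun i => b ^ i * a * (b ^ i)⁻¹
  refine ⟨φ, ?_⟩
  have hσ : ∀ i : ℕ, σ (Multiplicative.ofAdd 1 ^ i) (FreeGroup.of 0) = FreeGroup.of (i : ℤ) := by
    intro i
    induction i with
    | zero => simp
    | succ i ih =>
      rw [pow_succ', map_mul, MulAut.mul_apply, ih]
      simp [σ, zpowersHom_apply]
  have key : F.comp φ = SemidirectProduct.inl.comp (FreeGroup.map (fun i : ℕ => (i : ℤ))) := by
    ext1 i
    simp only [MonoidHom.comp_apply, φ, FreeGroup.lift_apply_of, FreeGroup.map.of, map_mul, map_pow,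
      map_inv]
    have ha : F a = SemidirectProduct.inl (FreeGroup.of 0) := by simp [F, a]
    have hb : F b = SemidirectProduct.inr (Multiplicative.ofAdd 1) := by simp [F, b]
    rw [ha, hb, ← hσ, SemidirectProduct.inl_aut, map_inv, map_pow]
  have hinj : Function.Injective (F.comp φ) := by
    rw [key]
    exact SemidirectProduct.inl_injective.comp
      (FreeGroup.map_injective Nat.cast_injective)
  exact Function.Injective.of_comp (f := F) hinj

end Quotients

section Syllables

/-- The subgroup generated by `a = of true` in the free group on `a` and `b = of false`. -/
abbrev powersA : Subgroup (FreeGroup Bool) := Subgroup.zpowers (FreeGroup.of true)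

open Classical in
/-- A cocycle on the cosets of `⟨a⟩`, recording for a reduced word `g` the exponent of the
`a`-syllable read inside each coset. -/
def IsSyllableCocycle (D : FreeGroup Bool → FreeGroup Bool ⧸ powersA → ℤ) : Prop :=
  IsCocycle D ∧
    (D (.of true) = fun c => if c = ((1 : FreeGroup Bool) : _ ⧸ powersA) then 1 else 0) ∧
    D (.of false) = 0

namespace IsSyllableCocycle

variable {D : FreeGroup Bool → FreeGroup Bool ⧸ powersA → ℤ}

theorem finite_support (hD : IsSyllableCocycle D) (g : FreeGroup Bool) :
    {c | D g c ≠ 0}.Finite := by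
  refine hD.1.finite_support (fun i => ?_) g
  cases i
  · simp [hD.2.2]
  · refine (Set.finite_singleton ((1 : FreeGroup Bool) : _ ⧸ powersA)).subset fun c hc => ?_
    by_contra h
    exact hc (by rw [hD.2.1]; exact if_neg h)

theorem apply_powersA (hD : IsSyllableCocycle D) {s : FreeGroup Bool} (hs : s ∈ powersA)
    {c : FreeGroup Bool ⧸ powersA} (hc : c ≠ ((1 : FreeGroup Bool) : _ ⧸ powersA)) :
    D s c = 0 := by
  have hs' : s ∈ Subgroup.closure {FreeGroup.of true} := by
    rwa [← Subgroup.zpowers_eq_closure]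
  have key : ∀ t ∈ Subgroup.closure {FreeGroup.of true}, ∀ c : FreeGroup Bool ⧸ powersA,
      c ≠ ((1 : FreeGroup Bool) : _ ⧸ powersA) → t • c ≠ ((1 : FreeGroup Bool) : _ ⧸ powersA) := by
    intro t ht c hc h
    rw [← Subgroup.zpowers_eq_closure] at ht
    refine hc ?_
    rw [← inv_smul_smul t c, h, MulAction.Quotient.smul_coe, QuotientGroup.eq]
    simpa using ht
  induction hs' using Subgroup.closure_induction generalizing c with
  | mem x hx =>
    obtain rfl := hx
    rw [hD.2.1]
    exact if_neg hc
  | one => exact hD.1.one c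
  | mul x y hx hy ihx ihy =>
    rw [hD.1, ihx (by simpa [Subgroup.zpowers_eq_closure] using hx) hc,
      ihy (by simpa [Subgroup.zpowers_eq_closure] using hy) (key _ (inv_mem hx) c hc), add_zero]
  | inv x hx ih =>
    rw [hD.1.inv, ih (by simpa [Subgroup.zpowers_eq_closure] using hx) (key x hx c hc), neg_zero]

theorem mul_of_true (hD : IsSyllableCocycle D) (x : FreeGroup Bool)
    {c : FreeGroup Bool ⧸ powersA} (hc : (x : _ ⧸ powersA) ≠ c) :
    D (x * .of true) c = D x c := by
  rw [hD.1, hD.2.1]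
  refine add_eq_left.mpr (if_neg fun h => ?_)
  rw [inv_smul_eq_iff, MulAction.Quotient.smul_coe, smul_eq_mul, mul_one] at h
  exact hc h.symm

theorem eq_of_coe_eq (hD : IsSyllableCocycle D) {x y : FreeGroup Bool}
    (h : (x : _ ⧸ powersA) = y) {c : FreeGroup Bool ⧸ powersA} (hc : (x : _ ⧸ powersA) ≠ c) :
    D y c = D x c := by
  obtain ⟨s, hs, rfl⟩ : ∃ s ∈ powersA, y = x * s := ⟨x⁻¹ * y, QuotientGroup.eq.mp h, by simp⟩
  rw [hD.1, hD.apply_powersA hs, add_zero]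
  intro e
  rw [inv_smul_eq_iff, MulAction.Quotient.smul_coe, smul_eq_mul, mul_one] at e
  exact hc e.symm

/-- Of two distinct cosets of `⟨a⟩`, one sees every given element in the same place as the other
coset. -/
theorem eq_or_eq (hD : IsSyllableCocycle D) {p q : FreeGroup Bool}
    (hpq : (p : _ ⧸ powersA) ≠ q) (x : FreeGroup Bool) : D x p = D q p ∨ D x q = D p q := by
  have step : ∀ y x, (D x p = D q p ∨ D x q = D p q) ↔
      (D (x * y) p = D q p ∨ D (x * y) q = D p q) := by
    intro y
    induction y using FreeGroup.induction_on with
    | C1 => simp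
    | of i =>
      intro x
      cases i with
      | false => simp [hD.1 x, hD.2.2]
      | true =>
        have hx : ((x * .of true : FreeGroup Bool) : _ ⧸ powersA) = x := by
          rw [eq_comm, QuotientGroup.eq]; simp
        by_cases h1 : (x : _ ⧸ powersA) = p
        · exact iff_of_true (.inr (hD.eq_of_coe_eq h1.symm hpq))
            (.inr (hD.eq_of_coe_eq (h1.symm.trans hx.symm) hpq))
        by_cases h2 : (x : _ ⧸ powersA) = q
        · exact iff_of_true (.inl (hD.eq_of_coe_eq h2.symm hpq.symm))
            (.inl (hD.eq_of_coe_eq (h2.symm.trans hx.symm) hpq.symm))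
        rw [hD.mul_of_true x h1, hD.mul_of_true x h2]
    | inv_of i ih => exact fun x => by simpa using (ih (x * (.of i)⁻¹)).symm
    | mul y z hy hz => exact fun x => by rw [hy, hz, mul_assoc]
  simpa using (step (p⁻¹ * x) p).mp (.inr rfl)

/-- At most one coset of `⟨a⟩` is the centre of the tripod spanned by `1`, `g` and `g * h`. -/
theorem subsingleton_branch (hD : IsSyllableCocycle D) (g h : FreeGroup Bool) :
    {c | D g c ≠ 0 ∧ D h (g⁻¹ • c) ≠ 0 ∧ D g c + D h (g⁻¹ • c) ≠ 0}.Subsingleton := by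
  intro c hc d hd
  obtain ⟨p, rfl⟩ := QuotientGroup.mk_surjective c
  obtain ⟨q, rfl⟩ := QuotientGroup.mk_surjective d
  by_contra hpq
  obtain ⟨c1, c2, c3⟩ := hc
  obtain ⟨d1, d2, d3⟩ := hd
  have h1 := hD.eq_or_eq hpq 1
  have h2 := hD.eq_or_eq hpq g
  have h3 := hD.eq_or_eq hpq (g * h)
  rw [hD.1.one, hD.1.one] at h1
  rw [hD.1, hD.1] at h3
  omega

end IsSyllableCocycle

/-- The odd function on `ℤ` with value `1` at `k` and `-1` at `-k`. -/
def oddIndicator (k n : ℤ) : ℤ := (if n = k then 1 else 0) - (if n = -k then 1 else 0)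

theorem oddIndicator_zero (k : ℤ) : oddIndicator k 0 = 0 := by
  unfold oddIndicator; split_ifs <;> omega

theorem oddIndicator_neg (k n : ℤ) : oddIndicator k (-n) = -oddIndicator k n := by
  unfold oddIndicator; split_ifs <;> omega

theorem oddIndicator_eq_zero {k n : ℤ} (h1 : k ≠ n) (h2 : k ≠ -n) : oddIndicator k n = 0 := by
  unfold oddIndicator; split_ifs <;> omega

/-- The number of `a`-syllables `aᵏ` of `g` minus the number of `a`-syllables `a⁻ᵏ`. -/
noncomputable def syllableCount (D : FreeGroup Bool → FreeGroup Bool ⧸ powersA → ℤ) (k : ℤ)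
    (g : FreeGroup Bool) : ℤ :=
  ∑ᶠ c, oddIndicator k (D g c)

namespace IsSyllableCocycle

variable {D : FreeGroup Bool → FreeGroup Bool ⧸ powersA → ℤ}

theorem finite_support_oddIndicator (hD : IsSyllableCocycle D) (k : ℤ) (g : FreeGroup Bool) :
    (Function.support fun c => oddIndicator k (D g c)).Finite :=
  (hD.finite_support g).subset fun c hc h => hc (by
    simp only [h, oddIndicator_zero])

theorem syllableCount_one (hD : IsSyllableCocycle D) (k : ℤ) : syllableCount D k 1 = 0 := by
  simp [syllableCount, hD.1.one, oddIndicator_zero]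

theorem syllableCount_inv (hD : IsSyllableCocycle D) (k : ℤ) (g : FreeGroup Bool) :
    syllableCount D k g⁻¹ = -syllableCount D k g := by
  rw [syllableCount, syllableCount, ← finsum_neg_distrib,
    ← finsum_comp_equiv (MulAction.toPerm g) (f := fun c => -oddIndicator k (D g c))]
  simp [hD.1.inv, oddIndicator_neg]

theorem syllableCount_mul_of_forall (hD : IsSyllableCocycle D) {k : ℤ} {g h : FreeGroup Bool}
    (H : ∀ c, oddIndicator k (D g c + D h (g⁻¹ • c)) =
      oddIndicator k (D g c) + oddIndicator k (D h (g⁻¹ • c))) :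
    syllableCount D k (g * h) = syllableCount D k g + syllableCount D k h := by
  have e : syllableCount D k h = ∑ᶠ c, oddIndicator k (D h (g⁻¹ • c)) :=
    (finsum_comp_equiv (MulAction.toPerm g⁻¹) (f := fun c => oddIndicator k (D h c))).symm
  rw [e, syllableCount, syllableCount, ← finsum_add_distrib (hD.finite_support_oddIndicator k g)]
  · exact finsum_congr fun c => by rw [hD.1, H]
  · exact (hD.finite_support_oddIndicator k h).preimage (MulAction.injective g⁻¹).injOn

theorem exists_card_le_syllableCount_mul (hD : IsSyllableCocycle D) (g h : FreeGroup Bool) :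
    ∃ T : Finset ℤ, T.card ≤ 6 ∧ ∀ k ∉ T,
      syllableCount D k (g * h) = syllableCount D k g + syllableCount D k h := by
  have easy : ∀ k u v : ℤ, ¬ (u ≠ 0 ∧ v ≠ 0 ∧ u + v ≠ 0) →
      oddIndicator k (u + v) = oddIndicator k u + oddIndicator k v := by
    intro k u v huv
    by_cases hu : u = 0
    · simp [hu, oddIndicator_zero]
    by_cases hv : v = 0
    · simp [hv, oddIndicator_zero]
    obtain rfl : v = -u := by
      by_contra hne
      exact huv ⟨hu, hv, fun h => hne (by omega)⟩
    simp [oddIndicator_zero, oddIndicator_neg]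
  by_cases hex : ∃ c, D g c ≠ 0 ∧ D h (g⁻¹ • c) ≠ 0 ∧ D g c + D h (g⁻¹ • c) ≠ 0
  · obtain ⟨c, hc⟩ := hex
    refine ⟨{D g c, -D g c, D h (g⁻¹ • c), -D h (g⁻¹ • c), D g c + D h (g⁻¹ • c),
      -(D g c + D h (g⁻¹ • c))}, Finset.card_le_six, fun k hk => ?_⟩
    refine hD.syllableCount_mul_of_forall fun d => ?_
    by_cases hd : D g d ≠ 0 ∧ D h (g⁻¹ • d) ≠ 0 ∧ D g d + D h (g⁻¹ • d) ≠ 0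
    · obtain rfl := hD.subsingleton_branch g h hc hd
      simp only [Finset.mem_insert, Finset.mem_singleton, not_or] at hk
      obtain ⟨k1, k2, k3, k4, k5, k6⟩ := hk
      rw [oddIndicator_eq_zero k1 k2, oddIndicator_eq_zero k3 k4, oddIndicator_eq_zero k5 k6,
        add_zero]
    · exact easy k _ _ hd
  · push Not at hex
    exact ⟨∅, by simp, fun k _ => hD.syllableCount_mul_of_forall fun d =>
      easy k _ _ fun hd => hd.2.2 (hex d hd.1 hd.2.1)⟩

theorem exists_syllableCount_map (hD : IsSyllableCocycle D) (w : FreeGroup ℕ) :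
    ∃ L : ℕ, ∀ φ : FreeGroup ℕ →* FreeGroup Bool, ∃ T : Finset ℤ, T.card ≤ L ∧ ∀ k ∉ T,
      syllableCount D k (φ w) =
        (expSum w).sum fun i n => n * syllableCount D k (φ (FreeGroup.of i)) := by
  classical
  induction w using FreeGroup.induction_on with
  | C1 => exact ⟨0, fun φ => ⟨∅, by simp, fun k _ => by simp [hD.syllableCount_one]⟩⟩
  | of i => exact ⟨0, fun φ => ⟨∅, by simp, fun k _ => by simp⟩⟩
  | inv_of i _ =>
    refine ⟨0, fun φ => ⟨∅, by simp, fun k _ => ?_⟩⟩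
    rw [map_inv, hD.syllableCount_inv, expSum_inv, expSum_of, ← Finsupp.single_neg,
      Finsupp.sum_single_index (by simp)]
    simp
  | mul v w hv hw =>
    obtain ⟨L, hL⟩ := hv
    obtain ⟨M, hM⟩ := hw
    refine ⟨L + M + 6, fun φ => ?_⟩
    obtain ⟨T, hT, hT'⟩ := hL φ
    obtain ⟨U, hU, hU'⟩ := hM φ
    obtain ⟨V, hV, hV'⟩ := hD.exists_card_le_syllableCount_mul (φ v) (φ w)
    refine ⟨T ∪ U ∪ V, ?_, fun k hk => ?_⟩
    · have := Finset.card_union_le (T ∪ U) V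
      have := Finset.card_union_le T U
      omega
    · simp only [Finset.mem_union, not_or] at hk
      rw [map_mul, hV' k hk.2, hT' k hk.1.1, hU' k hk.1.2, expSum_mul,
        Finsupp.sum_add_index' (by simp)]
      intros; ring

end IsSyllableCocycle

/-- The positive word `a ^ n₁ * b * a ^ n₂ * b * ⋯` with prescribed exponents. -/
def syllableWord (l : List ℕ) : FreeGroup Bool :=
  (l.map fun n => FreeGroup.of true ^ n * FreeGroup.of false).prod

theorem syllableWord_cons (n : ℕ) (l : List ℕ) :
    syllableWord (n :: l) = FreeGroup.of true ^ n * FreeGroup.of false * syllableWord l := by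
  simp [syllableWord]

theorem syllableWord_append (l m : List ℕ) :
    syllableWord (l ++ m) = syllableWord l * syllableWord m := by
  simp [syllableWord]

theorem syllableWord_replicate (m n : ℕ) :
    syllableWord (List.replicate m n) = (FreeGroup.of true ^ n * FreeGroup.of false) ^ m := by
  simp [syllableWord]

/-- The exponent sum of the generator `i`. -/
def exponentHom (i : Bool) : FreeGroup Bool →* Multiplicative ℤ :=
  FreeGroup.lift fun j => Multiplicative.ofAdd (if j = i then 1 else 0)

namespace IsSyllableCocycle

variable {D : FreeGroup Bool → FreeGroup Bool ⧸ powersA → ℤ}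

theorem apply_pow_mul (hD : IsSyllableCocycle D) (n : ℕ) (c : FreeGroup Bool ⧸ powersA) :
    D (.of true ^ n * .of false) c =
      open Classical in if c = ((1 : FreeGroup Bool) : _ ⧸ powersA) then (n : ℤ) else 0 := by
  have key : D (.of true ^ n) c =
      open Classical in if c = ((1 : FreeGroup Bool) : _ ⧸ powersA) then (n : ℤ) else 0 := by
    split_ifs with h
    · subst h
      induction n with
      | zero => simp [hD.1.one]
      | succ n ih =>
        have hn : (FreeGroup.of true ^ n)⁻¹ • ((1 : FreeGroup Bool) : _ ⧸ powersA) =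
            ((1 : FreeGroup Bool) : _ ⧸ powersA) := by
          rw [MulAction.Quotient.smul_coe, QuotientGroup.eq]; simp
        rw [pow_succ, hD.1, ih, hD.2.1, hn]
        simp
    · exact hD.apply_powersA (pow_mem (Subgroup.mem_zpowers _) n) h
  rw [hD.1, hD.2.2, key]
  simp

theorem exponentHom_nonneg (hD : IsSyllableCocycle D) (l : List ℕ) {z : FreeGroup Bool}
    (hz : D (syllableWord l) z ≠ 0) : 0 ≤ (exponentHom false z).toAdd := by
  induction l generalizing z with
  | nil => exact absurd (hD.1.one _) hz
  | cons n l ih =>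
    rw [syllableWord_cons, hD.1, hD.apply_pow_mul] at hz
    split_ifs at hz with h
    · rw [eq_comm, QuotientGroup.eq, Subgroup.mem_zpowers_iff] at h
      obtain ⟨k, hk⟩ := h
      rw [inv_one, one_mul] at hk
      rw [← hk]
      simp [exponentHom]
    · rw [zero_add, MulAction.Quotient.smul_coe] at hz
      have := ih hz
      simp [exponentHom] at this ⊢
      omega

theorem syllableCount_syllableWord (hD : IsSyllableCocycle D) {k : ℕ} (hk : 0 < k) (l : List ℕ) :
    syllableCount D k (syllableWord l) = l.count k := by
  induction l with
  | nil => exact hD.syllableCount_one k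
  | cons n l ih =>
    rw [syllableWord_cons, hD.syllableCount_mul_of_forall, ih, List.count_cons, Nat.cast_add,
      add_comm]
    · congr 1
      rw [syllableCount, finsum_eq_single _ ((1 : FreeGroup Bool) : _ ⧸ powersA)]
      · rw [hD.apply_pow_mul, if_pos rfl, oddIndicator, if_neg (show ¬ (n : ℤ) = -k by omega),
          sub_zero]
        simp
      · intro c hc
        rw [hD.apply_pow_mul, if_neg hc, oddIndicator_zero]
    · intro c
      by_cases hc : c = ((1 : FreeGroup Bool) : _ ⧸ powersA)
      · have : D (syllableWord l) ((FreeGroup.of true ^ n * FreeGroup.of false)⁻¹ • c) = 0 := by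
          by_contra h
          rw [hc, MulAction.Quotient.smul_coe] at h
          have := hD.exponentHom_nonneg l h
          simp [exponentHom] at this
        rw [this, oddIndicator_zero, add_zero, add_zero]
      · rw [hD.apply_pow_mul, if_neg hc, oddIndicator_zero, zero_add, zero_add]

end IsSyllableCocycle

end Syllables

section FreeGroupVerbalSets

/-- The Fox derivative with respect to `a = of true`: the signed number of times that the path
of `g` crosses the edge from `h` to `h * a`. -/
def IsEdgeCocycle (E : FreeGroup Bool → FreeGroup Bool → ℤ) : Prop :=
  IsCocycle E ∧ E (.of true) = Pi.single 1 1 ∧ E (.of false) = 0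

namespace IsEdgeCocycle

variable {E : FreeGroup Bool → FreeGroup Bool → ℤ}

theorem finite_support (hE : IsEdgeCocycle E) (g : FreeGroup Bool) : {z | E g z ≠ 0}.Finite := by
  refine hE.1.finite_support (fun i => ?_) g
  cases i
  · simp [hE.2.2]
  · exact (Set.finite_singleton 1).subset fun z hz => by simpa [hE.2.1, Pi.single_apply] using hz

theorem nonneg (hE : IsEdgeCocycle E) {g : FreeGroup Bool}
    (hg : g ∈ Submonoid.closure (Set.range FreeGroup.of)) (z : FreeGroup Bool) : 0 ≤ E g z := by
  induction hg using Submonoid.closure_induction generalizing z with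
  | mem g hg =>
    obtain ⟨_ | _, rfl⟩ := hg
    · simp [hE.2.2]
    · rw [hE.2.1, Pi.single_apply]; split_ifs <;> simp
  | one => rw [hE.1.one]
  | mul x y _ _ hx hy => rw [hE.1]; exact add_nonneg (hx _) (hy _)

theorem pos_of_mem_closure (hE : IsEdgeCocycle E) {x y : FreeGroup Bool}
    (hx : x ∈ Submonoid.closure (Set.range FreeGroup.of))
    (hy : y ∈ Submonoid.closure (Set.range FreeGroup.of)) : 0 < E (x * .of true * y) x := by
  rw [hE.1, hE.1, hE.2.1, smul_eq_mul, inv_mul_cancel, Pi.single_eq_same]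
  have h1 := hE.nonneg hx x
  have h2 := hE.nonneg hy ((x * FreeGroup.of true)⁻¹ • x)
  omega

theorem mem_powersA (hE : IsEdgeCocycle E) (n : ℕ) {z : FreeGroup Bool}
    (hz : E (.of true ^ n) z ≠ 0) : z ∈ powersA := by
  induction n with
  | zero => exact absurd (hE.1.one z) hz
  | succ n ih =>
    by_cases h : E (.of true ^ n) z = 0
    · rw [pow_succ, hE.1, h, hE.2.1, zero_add, Pi.single_apply, smul_eq_mul] at hz
      simp only [inv_mul_eq_one, ne_eq, ite_eq_right_iff, one_ne_zero, imp_false, not_not] at hz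
      exact hz ▸ pow_mem (Subgroup.mem_zpowers _) n
    · exact ih h

end IsEdgeCocycle

theorem exists_isEdgeCocycle : ∃ E, IsEdgeCocycle E := by
  obtain ⟨E, hE, h⟩ := exists_isCocycle (X := FreeGroup Bool)
    fun i : Bool => if i then Pi.single 1 1 else 0
  exact ⟨E, hE, by simp [h], by simp [h]⟩

theorem exists_isSyllableCocycle : ∃ D, IsSyllableCocycle D := by
  classical
  obtain ⟨D, hD, h⟩ := exists_isCocycle (X := FreeGroup Bool ⧸ powersA)
    fun (i : Bool) c => if i = true ∧ c = ((1 : FreeGroup Bool) : _ ⧸ powersA) then 1 else 0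
  refine ⟨D, hD, ?_, ?_⟩
  · rw [h]; funext c; simp
  · rw [h]; funext c; simp

theorem syllableWord_mem_closure (l : List ℕ) :
    syllableWord l ∈ Submonoid.closure (Set.range (FreeGroup.of : Bool → FreeGroup Bool)) := by
  refine Submonoid.list_prod_mem _ fun x hx => ?_
  obtain ⟨n, _, rfl⟩ := List.mem_map.mp hx
  exact mul_mem (pow_mem (Submonoid.subset_closure (Set.mem_range_self _)) n)
    (Submonoid.subset_closure (Set.mem_range_self _))

theorem IsRational.exists_syllable_gt {S : Set (FreeGroup Bool)} (hS : IsRational S) :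
    ∃ N : ℕ, ∀ B l n m, N < n → syllableWord (l ++ n :: m) ∈ S →
      ∃ n', B < n' ∧ syllableWord (l ++ n' :: m) ∈ S := by
  obtain ⟨E, hE⟩ := exists_isEdgeCocycle
  obtain ⟨N, hN⟩ := hS.exists_pump hE.1 hE.finite_support (.of true)
  have hmem : ∀ i (k : ℕ), FreeGroup.of i ^ k ∈
      Submonoid.closure (Set.range (FreeGroup.of : Bool → FreeGroup Bool)) :=
    fun i k => pow_mem (Submonoid.subset_closure (Set.mem_range_self _)) k
  have step : ∀ l n m, N < n → syllableWord (l ++ n :: m) ∈ S →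
      ∃ n', n < n' ∧ syllableWord (l ++ n' :: m) ∈ S := by
    intro l n m hn h
    obtain ⟨d, hd, hd'⟩ := hN _ h (syllableWord l) fun i hi => by
      have := hE.pos_of_mem_closure (mul_mem (syllableWord_mem_closure l) (hmem true i))
        (mul_mem (mul_mem (hmem true (n - i - 1)) (hmem false 1)) (syllableWord_mem_closure m))
      convert this.ne' using 2
      obtain ⟨k, rfl⟩ := Nat.exists_eq_add_of_lt (hi.trans_lt hn)
      rw [show i + k + 1 - i - 1 = k by omega, syllableWord_append, syllableWord_cons, pow_one]
      simp only [pow_add, pow_one, mul_assoc]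
      rw [← mul_assoc (FreeGroup.of true) (FreeGroup.of true ^ k), ← pow_succ', pow_succ, mul_assoc]
    refine ⟨d + n, by omega, ?_⟩
    convert hd' using 1
    rw [syllableWord_append, syllableWord_cons, syllableWord_append, syllableWord_cons, pow_add]
    group
  refine ⟨N, fun B l n m hn h => ?_⟩
  induction B with
  | zero => exact ⟨n, by omega, h⟩
  | succ B ih =>
    obtain ⟨n', hB, h'⟩ := ih
    by_cases hn' : N < n'
    · obtain ⟨n'', h1, h2⟩ := step l n' m hn' h'
      exact ⟨n'', by omega, h2⟩
    · exact ⟨n, by omega, h⟩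

theorem IsRational.exists_nodup_syllables {S : Set (FreeGroup Bool)} (hS : IsRational S) :
    ∃ n : ℕ, ∀ M l, syllableWord (List.replicate M n ++ l) ∈ S →
      ∃ k : List ℕ, k.length = M ∧ k.Nodup ∧ (∀ i ∈ k, n < i) ∧ syllableWord (k ++ l) ∈ S := by
  obtain ⟨N, hN⟩ := hS.exists_syllable_gt
  refine ⟨N + 1, fun M => ?_⟩
  induction M with
  | zero => exact fun l h => ⟨[], rfl, List.nodup_nil, by simp, h⟩
  | succ M ih =>
    intro l h
    rw [List.replicate_succ', List.append_assoc, List.singleton_append] at h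
    obtain ⟨k, hk1, hk2, hk3, hk4⟩ := ih _ h
    obtain ⟨n', hn', h'⟩ := hN (N + 1 + k.sum) k (N + 1) l (by omega) hk4
    refine ⟨k ++ [n'], by simp [hk1], ?_, ?_, by simpa using h'⟩
    · rw [← List.concat_eq_append, List.nodup_concat]
      refine ⟨fun hmem => ?_, hk2⟩
      have := List.single_le_sum (by simp) n' hmem
      omega
    · intro i hi
      rcases List.mem_append.mp hi with hi | hi
      · exact hk3 i hi
      · rw [List.mem_singleton.mp hi]; omega

theorem not_isRational_verbalSet_of_two_le {w : FreeGroup ℕ} (hw : 2 ≤ eWord w) :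
    ¬ IsRational (verbalSet w (FreeGroup Bool)) := by
  intro hS
  obtain ⟨D, hD⟩ := exists_isSyllableCocycle
  obtain ⟨L, hL⟩ := hD.exists_syllableCount_map w
  obtain ⟨n, hn⟩ := hS.exists_nodup_syllables
  obtain ⟨r, hr⟩ : ∃ r, (L + 1) * eWord w = (L + 1) + r :=
    Nat.exists_eq_add_of_le (Nat.le_mul_of_pos_right _ (by omega))
  obtain ⟨l, hlen, hnd, hgt, φ, hφ⟩ := hn (L + 1) (List.replicate r n) (by
    rw [List.replicate_append_replicate, ← hr, syllableWord_replicate, pow_mul]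
    exact pow_eWord_mem_verbalSet w _)
  obtain ⟨T, hT, hT'⟩ := hL φ
  have hsub : ∀ k ∈ l, (k : ℤ) ∈ T := by
    intro k hk
    by_contra hkT
    have h1 := hT' k hkT
    have hpos := hgt k hk
    have hdvd : (eWord w : ℤ) ∣ 1 := by
      have h2 : (1 : ℤ) = syllableCount D k (φ w) := by
        rw [hφ, hD.syllableCount_syllableWord (by omega), List.count_append,
          List.count_eq_one_of_mem hnd hk, List.count_replicate, if_neg (by simp; omega)]
        simp
      rw [h2, h1]
      exact Finset.dvd_sum fun i _ => Dvd.dvd.mul_right (eWord_dvd w i) _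
    have := Int.le_of_dvd one_pos hdvd
    omega
  have hcard : (l.toFinset.map Nat.castEmbedding : Finset ℤ).card ≤ T.card := by
    refine Finset.card_le_card fun x hx => ?_
    obtain ⟨k, hk, rfl⟩ := Finset.mem_map.mp hx
    exact hsub k (List.mem_toFinset.mp hk)
  rw [Finset.card_map, List.toFinset_card_of_nodup hnd, hlen] at hcard
  omega

theorem not_isRational_verbalSet_of_eq_zero {w : FreeGroup ℕ} (hw : w ≠ 1) (he : eWord w = 0) :
    ¬ IsRational (verbalSet w (FreeGroup Bool)) := by
  intro hS
  have hsum : expSum w = 0 := by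
    ext i
    simpa [he] using eWord_dvd w i
  have hexp : ∀ v ∈ verbalSet w (FreeGroup Bool), (exponentHom true v).toAdd = 0 := by
    rintro _ ⟨φ, rfl⟩
    have := toAdd_map_eq_sum ((exponentHom true).comp φ) w
    simpa [hsum] using this
  have hexpA : ∀ m : ℤ, (exponentHom true (.of true ^ m)).toAdd = m := by simp [exponentHom]
  obtain ⟨φ, hφ⟩ := exists_injective_hom_freeGroup_bool
  set g := φ w with hg
  have hgS : g ∈ verbalSet w (FreeGroup Bool) := ⟨φ, rfl⟩
  have hg1 : g ≠ 1 := fun h => hw (hφ (by rw [← hg, h, map_one]))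
  have hgA : g ∉ powersA := by
    intro h
    obtain ⟨m, hm⟩ := Subgroup.mem_zpowers_iff.mp h
    have := hexpA m
    rw [hm, hexp g hgS] at this
    exact hg1 (by rw [← hm, ← this, zpow_zero])
  obtain ⟨E, hE⟩ := exists_isEdgeCocycle
  obtain ⟨N, hN⟩ := hS.exists_pump hE.1 hE.finite_support (.of true)
  have hinj : Function.Injective fun m : ℤ => (FreeGroup.of true : FreeGroup Bool) ^ m := by
    intro i j hij
    rw [← hexpA i, ← hexpA j]
    exact congrArg (fun x => (exponentHom true x).toAdd) hij
  obtain ⟨B, hB⟩ := ((hE.finite_support g).preimage hinj.injOn).bddBelow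
  let n : ℕ := N + 1 + B.natAbs
  let a : FreeGroup Bool := .of true
  obtain ⟨d, hd, hd'⟩ := hN (a ^ n * g * (a ^ n)⁻¹)
    ⟨(MulAut.conj (a ^ n)).toMonoidHom.comp φ, rfl⟩ 1 (fun i hi => by
      have h1 : 0 < E (a ^ n) (a ^ i) := by
        have := hE.pos_of_mem_closure (x := a ^ i) (y := a ^ (n - i - 1))
          (pow_mem (Submonoid.subset_closure (Set.mem_range_self _)) _)
          (pow_mem (Submonoid.subset_closure (Set.mem_range_self _)) _)
        rwa [← pow_succ, ← pow_add, show i + 1 + (n - i - 1) = n by omega] at this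
      have h2 : E g ((a ^ n)⁻¹ * a ^ i) = 0 := by
        by_contra h
        have e : (a ^ n)⁻¹ * a ^ i = a ^ ((i : ℤ) - n) := by
          rw [sub_eq_neg_add, zpow_add, zpow_neg, zpow_natCast, zpow_natCast]
        rw [e] at h
        have := hB h
        omega
      have h3 : E (a ^ n) (a ^ n * ((a ^ n * g)⁻¹ * a ^ i)) = 0 := by
        by_contra h
        have := hE.mem_powersA n h
        have ha : ∀ k : ℕ, a ^ k ∈ powersA := fun k => pow_mem (Subgroup.mem_zpowers _) k
        rw [mul_inv_rev, mul_assoc, Subgroup.mul_mem_cancel_left _ (ha n),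
          Subgroup.mul_mem_cancel_right _ (mul_mem (inv_mem (ha n)) (ha i)), inv_mem_iff] at this
        exact hgA this
      rw [one_mul, hE.1, hE.1, hE.1.inv, smul_eq_mul, smul_eq_mul, smul_eq_mul, h2, h3]
      simpa using h1.ne')
  have h0 := hexp _ hd'
  have hg0 := hexp g hgS
  have hd0 := hexpA d
  rw [zpow_natCast] at hd0
  simp only [one_mul, inv_one, mul_one, map_mul, map_inv, toAdd_mul, toAdd_inv, hg0, hd0] at h0
  omega

theorem not_isRational_verbalSet_freeGroup {w : FreeGroup ℕ} (hw : IsProperWord w) :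
    ¬ IsRational (verbalSet w (FreeGroup Bool)) := by
  have h1 := hw.eWord_ne_one
  rcases Nat.eq_zero_or_pos (eWord w) with h0 | hpos
  · exact not_isRational_verbalSet_of_eq_zero hw.ne_one h0
  · exact not_isRational_verbalSet_of_two_le (by omega)

end FreeGroupVerbalSets

/-- If `H = C ∗ D` with `C, D` finitely generated groups with infinite
abelianizations, then no proper verbal set is rational in `H`. -/
theorem stmt_19 {C D : Type*} [Group C] [Group D] [Group.FG C] [Group.FG D]
    (hC : Infinite (Abelianization C)) (hD : Infinite (Abelianization D)) :
    ∀ w : FreeGroup ℕ, IsProperWord w → ¬ IsRational (verbalSet w (Monoid.Coprod C D)) := by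
  intro w hw hrat
  obtain ⟨f, hf⟩ := exists_surjective_hom_int C hC
  obtain ⟨g, hg⟩ := exists_surjective_hom_int D hD
  obtain ⟨F, hF⟩ := exists_surjective_hom_freeGroup_bool hf hg
  have := hrat.image F
  rw [image_verbalSet w hF] at this
  exact not_isRational_verbalSet_freeGroup hw this
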